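/- For every real σ > 1 and every real η > 0, the series Σ_{k=1}^{∞} −ζ'(σ+2kη)/ζ(σ+2kη) converges and satisfies the strict inequality Σ_{k=1}^{∞} −ζ'(σ+2kη)/ζ(σ+2kη) < log ζ(σ+η) / (2η). -/

import Mathlib

/-!
With `s = σ + η`, the left-hand side samples the Dirichlet series `-ζ'/ζ = ∑ Λ(n) n ^ (-·)` at the
midpoints `s + (2k + 1)η` of consecutive intervals of length `2η`. The antiderivative of `-ζ'/ζ` is
`-log ζ`, so the claim is that the midpoint rule underestimates the integral of `-ζ'/ζ` over
`(s, ∞)`. For a single exponential `exp (-ωt)` the midpoint sum is geometric, with value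
`exp (-ωs) / (2 sinh (ωη))`, while the integral divided by the step is `exp (-ωs) / (2ωη)`; these
compare through `x < sinh x`, and `-ζ'/ζ` is a nonnegative combination of such exponentials.
-/

open ArithmeticFunction hiding log
open Real

lemma hasSum_exp_neg_odd_mul {x : ℝ} (hx : 0 < x) :
    HasSum (fun k : ℕ ↦ exp (-((2 * k + 1) * x))) (1 / (2 * sinh x)) := by
  have hratio : exp (-(2 * x)) < 1 := exp_lt_one_iff.2 (by linarith)
  have hgeom := (hasSum_geometric_of_lt_one (exp_pos _).le hratio).mul_left (exp (-x))
  have hvalue : exp (-x) * (1 - exp (-(2 * x)))⁻¹ = 1 / (2 * sinh x) := by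
    have hsq : exp (-(2 * x)) = exp (-x) * exp (-x) := by rw [← exp_add]; ring_nf
    have hsinh : exp (-x) * (2 * sinh x) = 1 - exp (-(2 * x)) := by
      have hinv : exp (-x) * exp x = 1 := by rw [← exp_add, neg_add_cancel, exp_zero]
      rw [sinh_eq, hsq]
      linear_combination hinv
    rw [← hsinh]
    field_simp
  rw [← hvalue]
  refine hgeom.congr_fun fun k ↦ ?_
  rw [← exp_nat_mul, ← exp_add]
  ring_nf

section GeneralDirichletSeries

variable {ι : Type*}

/-- The general Dirichlet series `∑ aᵢ exp (-ωᵢ s)` with real coefficients `a` and frequencies `ω`,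
evaluated at a real point `s`. As an unconditional sum, it is `0` where the series diverges. -/
noncomputable def generalDirichletSeries (a ω : ι → ℝ) (s : ℝ) : ℝ :=
  ∑' i, a i * exp (-(ω i * s))

variable {a ω : ι → ℝ} {s η : ℝ}

lemma hasSum_mul_exp_neg_midpoints {c w : ℝ} (hw : c ≠ 0 → 0 < w) (hη : 0 < η) :
    HasSum (fun k : ℕ ↦ c * exp (-(w * (s + (2 * k + 1) * η))))
      (c * exp (-(w * s)) / (2 * sinh (w * η))) := by
  rcases eq_or_ne c 0 with rfl | hc
  · simp
  · rw [div_eq_mul_one_div]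
    refine ((hasSum_exp_neg_odd_mul (mul_pos (hw hc) hη)).mul_left _).congr_fun fun k ↦ ?_
    rw [mul_assoc, ← exp_add]
    ring_nf

lemma hasSum_generalDirichletSeries_midpoints (ha : 0 ≤ a) (hω : ∀ i, a i ≠ 0 → 0 < ω i)
    (hη : 0 < η) (hsum : Summable fun i ↦ a i * exp (-(ω i * s)) / (2 * sinh (ω i * η))) :
    HasSum (fun k : ℕ ↦ generalDirichletSeries a ω (s + (2 * k + 1) * η))
      (∑' i, a i * exp (-(ω i * s)) / (2 * sinh (ω i * η))) := by
  set F : ι → ℕ → ℝ := fun i k ↦ a i * exp (-(ω i * (s + (2 * k + 1) * η)))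
  have hrow (i : ι) : HasSum (F i) (a i * exp (-(ω i * s)) / (2 * sinh (ω i * η))) :=
    hasSum_mul_exp_neg_midpoints (hω i) hη
  have hF : Summable (Function.uncurry F) := by
    refine (summable_prod_of_nonneg fun p ↦ mul_nonneg (ha p.1) (exp_pos _).le).2
      ⟨fun i ↦ (hrow i).summable, ?_⟩
    exact hsum.congr fun i ↦ (hrow i).tsum_eq.symm
  have hcomm : ∑' k, ∑' i, F i k = ∑' i, a i * exp (-(ω i * s)) / (2 * sinh (ω i * η)) := by
    simp only [hF.tsum_comm, fun i ↦ (hrow i).tsum_eq]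
  exact hcomm ▸ hF.prod_symm.prod.hasSum

lemma mul_exp_div_sinh_lt {c w : ℝ} (hc : 0 < c) (hw : 0 < w) (hη : 0 < η) :
    c * exp (-(w * s)) / (2 * sinh (w * η)) < c / w * exp (-(w * s)) / (2 * η) := by
  have hsinh : w * η < sinh (w * η) := self_lt_sinh_iff.2 (mul_pos hw hη)
  calc c * exp (-(w * s)) / (2 * sinh (w * η))
      < c * exp (-(w * s)) / (2 * (w * η)) := by gcongr
    _ = c / w * exp (-(w * s)) / (2 * η) := by field_simp

theorem tsum_generalDirichletSeries_midpoints_lt (ha : 0 ≤ a) (hω : ∀ i, a i ≠ 0 → 0 < ω i)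
    (hne : a ≠ 0) (hη : 0 < η) (hsum : Summable fun i ↦ a i / ω i * exp (-(ω i * s))) :
    Summable (fun k : ℕ ↦ generalDirichletSeries a ω (s + (2 * k + 1) * η)) ∧
      ∑' k : ℕ, generalDirichletSeries a ω (s + (2 * k + 1) * η) <
        generalDirichletSeries (fun i ↦ a i / ω i) ω s / (2 * η) := by
  have hlt (i : ι) (hi : a i ≠ 0) : a i * exp (-(ω i * s)) / (2 * sinh (ω i * η)) <
      a i / ω i * exp (-(ω i * s)) / (2 * η) :=
    mul_exp_div_sinh_lt ((ha i).lt_of_ne' hi) (hω i hi) hη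
  have hle (i : ι) : a i * exp (-(ω i * s)) / (2 * sinh (ω i * η)) ≤
      a i / ω i * exp (-(ω i * s)) / (2 * η) := by
    by_cases hi : a i = 0
    · simp [hi]
    · exact (hlt i hi).le
  have hnonneg (i : ι) : 0 ≤ a i * exp (-(ω i * s)) / (2 * sinh (ω i * η)) :=
    (hasSum_mul_exp_neg_midpoints (hω i) hη).nonneg fun _ ↦ mul_nonneg (ha i) (exp_pos _).le
  have hright := hsum.div_const (2 * η)
  have hleft := Summable.of_nonneg_of_le hnonneg hle hright
  have hmid := hasSum_generalDirichletSeries_midpoints ha hω hη hleft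
  obtain ⟨i, hi⟩ := Function.ne_iff.1 hne
  refine ⟨hmid.summable, ?_⟩
  rw [hmid.tsum_eq, generalDirichletSeries, ← tsum_div_const]
  exact hleft.tsum_lt_tsum hle (hlt i hi) hright

lemma LSeries_ofReal_eq_generalDirichletSeries {f : ℕ → ℝ} (hf : f 0 = 0) (s : ℝ) :
    LSeries (fun n ↦ f n) s = (generalDirichletSeries f (fun n ↦ log n) s : ℂ) := by
  rw [LSeries_def₀ (by simp [hf]), generalDirichletSeries, Complex.ofReal_tsum]
  refine tsum_congr fun n ↦ ?_
  rcases n.eq_zero_or_pos with rfl | hn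
  · simp [hf]
  · rw [exp_neg, ← rpow_def_of_pos (mod_cast hn), ← div_eq_mul_inv, Complex.ofReal_div,
      Complex.ofReal_cpow n.cast_nonneg, Complex.ofReal_natCast]

end GeneralDirichletSeries

section VonMangoldt

lemma log_pos_of_vonMangoldt_ne_zero {n : ℕ} (hn : Λ n ≠ 0) : 0 < log n :=
  log_pos (mod_cast (vonMangoldt_ne_zero_iff.1 hn).one_lt)

variable {s : ℝ}

lemma neg_deriv_riemannZeta_div_eq_generalDirichletSeries (hs : 1 < s) :
    -(deriv riemannZeta s / riemannZeta s) =
      (generalDirichletSeries (fun n : ℕ ↦ Λ n) (fun n ↦ log n) s : ℂ) := by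
  rw [← neg_div, ← LSeries_vonMangoldt_eq_deriv_riemannZeta_div (by simpa using hs),
    LSeries_ofReal_eq_generalDirichletSeries vonMangoldt.map_zero]

lemma log_riemannZeta_eq_generalDirichletSeries (hs : 1 < s) :
    log (riemannZeta s).re =
      generalDirichletSeries (fun n : ℕ ↦ Λ n / log n) (fun n ↦ log n) s := by
  rw [← riemannZeta_eq_exp_LSeries (by simpa using hs)]
  simp only [← Complex.ofReal_div]
  rw [LSeries_ofReal_eq_generalDirichletSeries (by simp), Complex.exp_ofReal_re, log_exp]

lemma summable_vonMangoldt_div_log_mul_exp (hs : 1 < s) :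
    Summable fun n : ℕ ↦ Λ n / log n * exp (-(log n * s)) := by
  refine .of_nonneg_of_le (fun n ↦ ?_) (fun n ↦ ?_) (summable_nat_rpow.2 (neg_lt_neg hs))
  · exact mul_nonneg (div_nonneg vonMangoldt_nonneg (log_natCast_nonneg n)) (exp_pos _).le
  · rcases n.eq_zero_or_pos with rfl | hn
    · simpa using rpow_nonneg le_rfl (-s)
    · have hratio : Λ n / log n ≤ 1 :=
        div_le_one_of_le₀ vonMangoldt_le_log (log_natCast_nonneg n)
      rw [rpow_def_of_pos (mod_cast hn), mul_neg]
      exact mul_le_of_le_one_left (exp_pos _).le hratio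

end VonMangoldt

theorem stmt_6_general (σ η : ℝ) (hση : 1 < σ + η) (hη : 0 < η) :
    Summable (fun k : ℕ =>
      -(deriv riemannZeta ((σ : ℂ) + 2 * (k + 1 : ℕ) * η) /
          riemannZeta ((σ : ℂ) + 2 * (k + 1 : ℕ) * η)).re) ∧
    ∑' k : ℕ,
        -(deriv riemannZeta ((σ : ℂ) + 2 * (k + 1 : ℕ) * η) /
            riemannZeta ((σ : ℂ) + 2 * (k + 1 : ℕ) * η)).re <
      Real.log (riemannZeta ((σ : ℂ) + η)).re / (2 * η) := by
  have hne : (fun n : ℕ ↦ Λ n) ≠ 0 :=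
    Function.ne_iff.2 ⟨2, vonMangoldt_ne_zero_iff.2 Nat.prime_two.isPrimePow⟩
  have hterm (k : ℕ) : -(deriv riemannZeta ((σ : ℂ) + 2 * (k + 1 : ℕ) * η) /
      riemannZeta ((σ : ℂ) + 2 * (k + 1 : ℕ) * η)).re =
        generalDirichletSeries (fun n : ℕ ↦ Λ n) (fun n ↦ log n)
          (σ + η + (2 * k + 1) * η) := by
    have hmidpoint : (σ : ℂ) + 2 * (k + 1 : ℕ) * η = (σ + η + (2 * k + 1) * η : ℝ) := by
      push_cast; ring
    have hgt : 1 < σ + η + (2 * k + 1) * η := hση.trans (lt_add_of_pos_right _ (by positivity))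
    rw [hmidpoint, ← Complex.neg_re, neg_deriv_riemannZeta_div_eq_generalDirichletSeries hgt,
      Complex.ofReal_re]
  simp only [hterm, ← Complex.ofReal_add, log_riemannZeta_eq_generalDirichletSeries hση]
  exact tsum_generalDirichletSeries_midpoints_lt (fun _ ↦ vonMangoldt_nonneg)
    (fun _ ↦ log_pos_of_vonMangoldt_ne_zero) hne hη (summable_vonMangoldt_div_log_mul_exp hση)

/-- For every real `σ > 1` and every real `η > 0`, the series
`Σ_{k≥1} −ζ'(σ+2kη)/ζ(σ+2kη)` converges and is strictly less than
`log ζ(σ+η) / (2η)`.  (For real arguments `> 1` the values of `ζ` and `ζ'` are real,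
so we take real parts.) -/
theorem stmt_6 (σ η : ℝ) (hσ : 1 < σ) (hη : 0 < η) :
    Summable (fun k : ℕ =>
      -(deriv riemannZeta ((σ : ℂ) + 2 * (k + 1 : ℕ) * η) /
          riemannZeta ((σ : ℂ) + 2 * (k + 1 : ℕ) * η)).re) ∧
    ∑' k : ℕ,
        -(deriv riemannZeta ((σ : ℂ) + 2 * (k + 1 : ℕ) * η) /
            riemannZeta ((σ : ℂ) + 2 * (k + 1 : ℕ) * η)).re <
      Real.log (riemannZeta ((σ : ℂ) + η)).re / (2 * η) :=
  stmt_6_general σ η (by linarith) hη
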